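/- The Fourier transform of the Fejér kernel F(x) := (1/2)·sinc²(x/2), defined by F̂(v) := ∫_ℝ F(u)·e^{−ivu} du, equals 1 − |v/π| for |v| ≤ π and 0 for |v| > π. -/

import Mathlib

open MeasureTheory Filter

noncomputable section

/-- The sinc function: `sinc x = sin(πx)/(πx)` for `x ≠ 0`, `sinc 0 = 1`. -/
def sinc (x : ℝ) : ℝ := if x = 0 then 1 else Real.sin (Real.pi * x) / (Real.pi * x)

/-- The Fejér kernel `F(x) = (1/2)·sinc²(x/2)`. -/
def Fejer (x : ℝ) : ℝ := (1 / 2) * sinc (x / 2) ^ 2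

/-- The Fourier transform `χ̂(v) = ∫_ℝ χ(u)·e^{−ivu} du`. -/
def fourierT (χ : ℝ → ℝ) (v : ℝ) : ℂ :=
  ∫ u : ℝ, (χ u : ℂ) * Complex.exp (-(Complex.I * (v : ℂ) * (u : ℂ)))

/-!
The tent function of half-width `2r` is the convolution square of the indicator of `[-r, r]`, whose
Fourier transform is a multiple of `sin (2πrξ) / (2πrξ)`. Hence the Fourier transform of the tent is
a multiple of the square of that function, which is integrable, and Fourier inversion, together with
the evenness of the tent, turns the square back into the tent.
-/

section Box

open Set FourierTransform Convolution ContinuousLinearMap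
open scoped Real

variable {r : ℝ}

/-- The indicator of the interval `[-r, r]`, complex-valued so that it can be fed to the Fourier
transform directly. -/
def box (r : ℝ) : ℝ → ℂ := (Icc (-r) r).indicator 1

/-- The tent function of height and half-width `w`; it vanishes identically for `w ≤ 0`. -/
def tent (w x : ℝ) : ℝ := max (w - |x|) 0

lemma continuous_tent (w : ℝ) : Continuous (tent w) := by unfold tent; fun_prop

lemma tent_neg (w x : ℝ) : tent w (-x) = tent w x := by simp only [tent, abs_neg]

lemma tent_mul_mul {a : ℝ} (ha : 0 ≤ a) (w x : ℝ) : tent (a * w) (a * x) = a * tent w x := by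
  rw [tent, tent, abs_mul, abs_of_nonneg ha, ← mul_sub, mul_max_of_nonneg _ _ ha, mul_zero]

lemma integrable_box (r : ℝ) : Integrable (box r) :=
  (integrable_indicator_iff measurableSet_Icc).2 continuous_one.integrableOn_Icc

lemma box_convolution_box (r : ℝ) : box r ⋆[mul ℂ ℂ] box r = fun x => (tent (2 * r) x : ℂ) := by
  funext x
  have product_eq : (fun t => box r t * box r (x - t)) =
      (Icc (max (-r) (x - r)) (min r (x + r))).indicator 1 := by
    have shift : ∀ t, x - t ∈ Icc (-r) r ↔ t ∈ Icc (x - r) (x + r) := by grind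
    funext t
    rw [← Icc_inter_Icc, inter_indicator_one]
    simp only [box, Pi.mul_apply, indicator_apply, shift, Pi.one_apply]
  have length_eq : min r (x + r) - max (-r) (x - r) = 2 * r - |x| := by grind
  rw [convolution_mul, product_eq, Pi.one_def, integral_indicator_const _ measurableSet_Icc,
    Real.volume_real_Icc, length_eq, Complex.real_smul, mul_one, tent]

lemma integrable_tent (w : ℝ) : Integrable (fun x => (tent w x : ℂ)) := by
  have h := (integrable_box (w / 2)).integrable_convolution (mul ℂ ℂ) (integrable_box (w / 2))
  rwa [box_convolution_box, mul_div_cancel₀ w two_ne_zero] at h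

lemma integral_exp_mul_I_eq_sinc_mul (a r : ℝ) :
    ∫ t in -r..r, Complex.exp ((a * t : ℝ) * Complex.I) = 2 * r * Real.sinc (a * r) := by
  rcases eq_or_ne a 0 with rfl | ha
  · simp [two_mul]
  · have ha' : (a : ℂ) ≠ 0 := Complex.ofReal_ne_zero.2 ha
    rw [intervalIntegral.integral_comp_mul_left
      (fun t : ℝ => Complex.exp (t * Complex.I)) ha, mul_neg, integral_exp_mul_I_eq_sinc,
      Complex.real_smul]
    push_cast
    field_simp

lemma fourier_box (hr : 0 ≤ r) (ξ : ℝ) :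
    𝓕 (box r) ξ = 2 * r * Real.sinc (2 * π * r * ξ) := by
  calc 𝓕 (box r) ξ
      = ∫ t, (Icc (-r) r).indicator
          (fun t : ℝ => Complex.exp ((-2 * π * ξ * t : ℝ) * Complex.I)) t := by
        rw [Real.fourier_real_eq_integral_exp_smul]
        refine integral_congr_ae (.of_forall fun t => ?_)
        simp only [box, indicator_apply, Pi.one_apply, smul_eq_mul, mul_ite, mul_one, mul_zero,
          mul_right_comm _ t ξ]
    _ = ∫ t in -r..r, Complex.exp ((-2 * π * ξ * t : ℝ) * Complex.I) := by
        rw [integral_indicator measurableSet_Icc, integral_Icc_eq_integral_Ioc,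
          intervalIntegral.integral_of_le (neg_le_self hr)]
    _ = 2 * r * Real.sinc (2 * π * r * ξ) := by
        rw [integral_exp_mul_I_eq_sinc_mul, ← Real.sinc_neg]
        ring_nf

lemma fourier_tent (hr : 0 ≤ r) :
    𝓕 (fun x => (tent (2 * r) x : ℂ)) =
      fun ξ => (((2 * r * Real.sinc (2 * π * r * ξ)) ^ 2 : ℝ) : ℂ) := by
  funext ξ
  rw [← box_convolution_box, Real.fourier_mul_convolution_eq (integrable_box r) (integrable_box r),
    fourier_box hr]
  push_cast
  ring

end Box

section SincSq

open FourierTransform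
open scoped Real

variable {r : ℝ}

lemma sinc_sq_le (x : ℝ) : Real.sinc x ^ 2 ≤ 2 * (1 + x ^ 2)⁻¹ := by
  have sinc_sq_le_one : Real.sinc x ^ 2 ≤ 1 :=
    (sq_le_one_iff_abs_le_one _).2 (Real.abs_sinc_le_one x)
  have mul_sinc : x * Real.sinc x = Real.sin x := by
    rcases eq_or_ne x 0 with rfl | hx
    · simp
    · rw [Real.sinc_of_ne_zero hx, mul_div_cancel₀ _ hx]
  have mul_sinc_sq_le_one : x ^ 2 * Real.sinc x ^ 2 ≤ 1 := by
    rw [← mul_pow, mul_sinc]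
    exact Real.sin_sq_le_one x
  rw [← div_eq_mul_inv, le_div_iff₀ (by positivity)]
  linarith

lemma integrable_sinc_sq : Integrable (fun x => Real.sinc x ^ 2) :=
  (integrable_inv_one_add_sq.const_mul 2).mono' (by fun_prop) <| .of_forall fun x => by
    rw [Real.norm_of_nonneg (sq_nonneg _)]
    exact sinc_sq_le x

lemma fourier_sinc_sq (hr : 0 < r) :
    𝓕 (fun ξ => (((2 * r * Real.sinc (2 * π * r * ξ)) ^ 2 : ℝ) : ℂ)) =
      fun x => (tent (2 * r) x : ℂ) := by
  have fourierInv_tent :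
      𝓕⁻ (fun x => (tent (2 * r) x : ℂ)) = 𝓕 (fun x => (tent (2 * r) x : ℂ)) := by
    rw [Real.fourierInv_eq_fourier_comp_neg]
    simp only [tent_neg]
  have integrable_fourier : Integrable (𝓕 (fun x => (tent (2 * r) x : ℂ))) := by
    rw [fourier_tent hr.le]
    simp only [mul_pow _ (Real.sinc _)]
    exact ((integrable_sinc_sq.comp_mul_left' (by positivity)).const_mul _).ofReal
  rw [← fourier_tent hr.le, ← fourierInv_tent]
  exact (Complex.continuous_ofReal.comp (continuous_tent _)).fourier_fourierInv_eq
    (integrable_tent _) integrable_fourier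

lemma fourierT_eq_fourier (χ : ℝ → ℝ) (v : ℝ) :
    fourierT χ v = 𝓕 (fun u => (χ u : ℂ)) (v / (2 * π)) := by
  rw [Real.fourier_real_eq_integral_exp_smul, fourierT]
  refine integral_congr_ae (.of_forall fun u => ?_)
  have phase_eq : -2 * π * u * (v / (2 * π)) = -(v * u) := by field_simp
  simp only [smul_eq_mul, phase_eq, mul_comm (χ u : ℂ)]
  push_cast
  ring_nf

lemma fourierT_const_mul (c : ℝ) (χ : ℝ → ℝ) (v : ℝ) :
    fourierT (fun u => c * χ u) v = c * fourierT χ v := by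
  simp only [fourierT, Complex.ofReal_mul, mul_assoc, integral_const_mul]

lemma fourierT_sinc_sq (hr : 0 < r) (v : ℝ) :
    fourierT (fun u => Real.sinc (r * u) ^ 2) v = (π / (2 * r ^ 2) * tent (2 * r) v : ℝ) := by
  have rescale : (fun u => Real.sinc (r * u) ^ 2) = fun u =>
      (π / r) ^ 2 * (2 * (r / (2 * π)) * Real.sinc (2 * π * (r / (2 * π)) * u)) ^ 2 := by
    funext u
    field_simp
  have tent_rescale : tent (2 * (r / (2 * π))) (v / (2 * π)) = (2 * π)⁻¹ * tent (2 * r) v := by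
    rw [← tent_mul_mul (by positivity)]
    congr 1 <;> ring
  rw [rescale, fourierT_const_mul, fourierT_eq_fourier, fourier_sinc_sq (by positivity)]
  simp only [tent_rescale]
  norm_cast
  field_simp

end SincSq

lemma sinc_eq_real_sinc (x : ℝ) : sinc x = Real.sinc (Real.pi * x) := by
  simp only [sinc, Real.sinc_apply, mul_eq_zero, Real.pi_ne_zero, false_or]

lemma Fejer_eq : Fejer = fun x => 1 / 2 * Real.sinc (Real.pi / 2 * x) ^ 2 := by
  funext x
  rw [Fejer, sinc_eq_real_sinc, mul_div_left_comm, mul_comm x, div_mul_eq_mul_div]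

lemma tent_div_self {w : ℝ} (hw : 0 < w) (x : ℝ) :
    tent w x / w = if |x| ≤ w then 1 - |x / w| else 0 := by
  rw [abs_div, abs_of_pos hw, tent]
  split_ifs with h
  · rw [max_eq_left (sub_nonneg.2 h), sub_div, div_self hw.ne']
  · rw [max_eq_right (sub_nonpos.2 (not_le.1 h).le), zero_div]

/-- The Fourier transform of the Fejér kernel is the triangle function:
`F̂(v) = 1 − |v/π|` for `|v| ≤ π` and `F̂(v) = 0` for `|v| > π`. -/
theorem statement14 (v : ℝ) :
    fourierT Fejer v =
      (((if |v| ≤ Real.pi then 1 - |v / Real.pi| else 0) : ℝ) : ℂ) := by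
  rw [Fejer_eq, fourierT_const_mul, fourierT_sinc_sq (by positivity), ← Complex.ofReal_mul,
    mul_div_cancel₀ _ two_ne_zero, ← tent_div_self Real.pi_pos]
  congr 1
  field_simp
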